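/- arXiv:2104.12415 — 3 statements merged into one kernel-verified Lean document; each statement's English description precedes it below -/
import Mathlib

section
/- Let (A,S,Z,Φ) be a structured C*-algebra. If Z₊ (the set of positive elements of Z) is bistable, then Z is bistable. Conversely, if Φ[S] is bistable and Z is bistable, then Z₊ is bistable. -/
variable {A : Type*} [CStarAlgebra A] [PartialOrder A] [StarOrderedRing A]

/-- A structured C*-algebra `(A, S, Z, Φ)`. -/
structure StructuredCStar (A : Type*) [CStarAlgebra A] [PartialOrder A]
    [StarOrderedRing A] where
  /-- The expectation. -/
  Φ : A →ₗ[ℂ] A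
  /-- The distinguished closed *-subsemigroup. -/
  S : Set A
  /-- The distinguished central C*-subalgebra. -/
  Z : Set A
  Φ_idem : ∀ a : A, Φ (Φ a) = Φ a
  Φ_contractive : ∀ a : A, ‖Φ a‖ ≤ ‖a‖
  Φ_pos : ∀ a : A, 0 ≤ a → 0 ≤ Φ a
  Φ_mul_left : ∀ a b : A, Φ (Φ a * b) = Φ a * Φ b
  Φ_mul_right : ∀ a b : A, Φ (a * Φ b) = Φ a * Φ b
  S_isClosed : IsClosed S
  S_mul : ∀ a ∈ S, ∀ b ∈ S, a * b ∈ S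
  S_star : ∀ a ∈ S, star a ∈ S
  S_smul : ∀ (c : ℂ), ∀ a ∈ S, c • a ∈ S
  Z_sub_S : Z ⊆ S
  Z_isClosed : IsClosed Z
  Z_add : ∀ a ∈ Z, ∀ b ∈ Z, a + b ∈ Z
  Z_mul : ∀ a ∈ Z, ∀ b ∈ Z, a * b ∈ Z
  Z_star : ∀ a ∈ Z, star a ∈ Z
  Z_smul : ∀ (c : ℂ), ∀ a ∈ Z, c • a ∈ Z
  Z_fixed : ∀ z ∈ Z, Φ z = z
  Z_central : ∀ z ∈ Z, ∀ a : A, z * Φ a = Φ a * z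
  PhiS_add : ∀ x ∈ Φ '' S, ∀ y ∈ Φ '' S, x + y ∈ Φ '' S
  PhiS_ideal_right : ∀ x ∈ Φ '' S, ∀ a : A, x * Φ a ∈ Φ '' S
  PhiS_ideal_left : ∀ x ∈ Φ '' S, ∀ a : A, Φ a * x ∈ Φ '' S
  S_sq_sub_PhiS : ∀ s ∈ S, star s * s ∈ Φ '' S
  PhiS_sub_S : ∀ s ∈ S, Φ s ∈ S

namespace StructuredCStar

variable (𝒜 : StructuredCStar A)

/-- `a <_s b` : domination witnessed by `s`. -/
def domBy (a s b : A) : Prop :=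
  a = a * s * b ∧ a = b * s * a ∧
  a * s ∈ 𝒜.Φ '' 𝒜.S ∧ s * a ∈ 𝒜.Φ '' 𝒜.S ∧
  b * s ∈ 𝒜.Z ∧ s * b ∈ 𝒜.Z

/-- `a < b` : domination. -/
def dom (a b : A) : Prop := ∃ s ∈ 𝒜.S, 𝒜.domBy a s b

/-- `N ⊆ S` is binormal. -/
def Binormal (N : Set A) : Prop :=
  ∀ a ∈ 𝒜.S, ∀ b ∈ 𝒜.S, a * b ∈ N → ∀ z ∈ N, a * z * b ∈ N

/-- `B ⊆ S` is bistable. -/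
def Bistable (B : Set A) : Prop :=
  ∀ a ∈ 𝒜.S, ∀ b ∈ 𝒜.S, a * b ∈ B → 𝒜.Φ a * b ∈ B ∧ a * 𝒜.Φ b ∈ B

/-- `P ⊆ S` is productive. -/
def Productive (P : Set A) : Prop :=
  ∀ a ∈ 𝒜.S, 𝒜.Φ a ∈ closure ((a * ·) '' P) ∧ 𝒜.Φ a ∈ closure ((· * a) '' P)

end StructuredCStar

open Filter Topology

/-- An elementary bound on the interval `[0, 1]`. -/
lemma mul_one_sub_pow_le_inv {x : ℝ} (hx₀ : 0 ≤ x) (hx₁ : x ≤ 1) (n : ℕ) :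
    (1 - x) ^ n * x * (1 - x) ^ n ≤ ((n : ℝ) + 1)⁻¹ := by
  have hp : 0 ≤ (1 - x) ^ n := pow_nonneg (by linarith) n
  have hp₁ : (1 - x) ^ n ≤ 1 := pow_le_one₀ (by linarith) (by linarith)
  have hbern : 1 + (n : ℝ) * x ≤ (1 + x) ^ n := one_add_mul_le_pow (by linarith) n
  have hprod : (1 - x) ^ n * (1 + x) ^ n ≤ 1 := by
    rw [← mul_pow]
    exact pow_le_one₀ (by nlinarith) (by nlinarith)
  have hmul : (1 - x) ^ n * (1 + n * x) ≤ 1 := (mul_le_mul_of_nonneg_left hbern hp).trans hprod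
  have hone : (1 - x) ^ n * x * (1 - x) ^ n ≤ (1 - x) ^ n * x :=
    mul_le_of_le_one_right (mul_nonneg hp hx₀) hp₁
  refine hone.trans ?_
  rw [← one_div, le_div_iff₀ (by positivity)]
  nlinarith [mul_le_mul_of_nonneg_left hx₁ hp]

/-- For positive `h` and small `c > 0`, the powers `(1 - c h) ^ n` asymptotically annihilate `h`. -/
lemma norm_one_sub_smul_pow_conjugate_le {h : A} (hh : 0 ≤ h) {c : ℝ} (hc : 0 < c)
    (hch : c * ‖h‖ ≤ 1) (n : ℕ) :
    ‖(1 - c • h) ^ n * h * (1 - c • h) ^ n‖ ≤ c⁻¹ * ((n : ℝ) + 1)⁻¹ := by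
  have hsa : IsSelfAdjoint h := .of_nonneg hh
  have hcfc : (1 - c • h) ^ n * h * (1 - c • h) ^ n =
      cfc (fun t : ℝ ↦ (1 - c * t) ^ n * t * (1 - c * t) ^ n) h := by
    have hpow : cfc (fun t : ℝ ↦ (1 - c * t) ^ n) h = (1 - c • h) ^ n := by
      rw [cfc_pow (fun t : ℝ ↦ 1 - c * t) n h, cfc_sub (fun _ : ℝ ↦ 1) (fun t ↦ c * t) h,
        cfc_const_one ℝ h, cfc_const_mul_id c h]
    rw [cfc_mul (fun t : ℝ ↦ (1 - c * t) ^ n * t) (fun t ↦ (1 - c * t) ^ n) h,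
      cfc_mul (fun t : ℝ ↦ (1 - c * t) ^ n) (fun t ↦ t) h, hpow, cfc_id' ℝ h]
  rw [hcfc]
  cases subsingleton_or_nontrivial A
  · rw [norm_of_subsingleton]
    positivity
  refine norm_cfc_le (by positivity) fun t ht ↦ ?_
  have ht₀ : 0 ≤ t := spectrum_nonneg_of_nonneg hh ht
  have ht₁ : t ≤ ‖h‖ := (Real.le_norm_self t).trans (spectrum.norm_le_norm_of_mem ht)
  have hct : c * t ≤ 1 := (mul_le_mul_of_nonneg_left ht₁ hc.le).trans hch
  have hp : 0 ≤ (1 - c * t) ^ n := pow_nonneg (by linarith) n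
  rw [Real.norm_of_nonneg (by positivity), le_inv_mul_iff₀ hc]
  calc c * ((1 - c * t) ^ n * t * (1 - c * t) ^ n)
      = (1 - c * t) ^ n * (c * t) * (1 - c * t) ^ n := by ring
    _ ≤ ((n : ℝ) + 1)⁻¹ := mul_one_sub_pow_le_inv (by positivity) hct n

/-- If `w` is normal, commutes with `z ≥ 0` and satisfies `w* w = w* z`, then `w ≥ 0`. -/
lemma nonneg_of_star_mul_self_eq_star_mul {w z : A} (hw : star w * w = w * star w)
    (hwz : w * z = z * w) (hz : 0 ≤ z) (h : star w * w = star w * z) : 0 ≤ w := by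
  have hzs : star z = z := (IsSelfAdjoint.of_nonneg hz).star_eq
  have hzw : star w * w = z * w := by simpa [hzs] using congrArg star h
  have hdz : (star w - w) * z = 0 := by rw [sub_mul, ← h, hwz, hzw, sub_self]
  have hdww : (star w - w) * (star w * w) = 0 := by rw [hzw, ← mul_assoc, hdz, zero_mul]
  have hdws : (star w - w) * star w = 0 := by
    rw [← CStarRing.mul_star_self_eq_zero_iff, star_mul, star_star, ← mul_assoc,
      mul_assoc _ (star w) w, hdww, zero_mul]
  have hdw : (star w - w) * w = 0 := by
    rw [← CStarRing.mul_star_self_eq_zero_iff, star_mul, ← mul_assoc,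
      mul_assoc _ w (star w), ← hw, hdww, zero_mul]
  have hws : star w = w := by
    rw [← sub_eq_zero, ← CStarRing.mul_star_self_eq_zero_iff, star_sub, star_star, mul_sub,
      hdw, hdws, sub_zero]
  have hcube : w ^ 3 = star w * z * w := by rw [← h, hws, pow_succ, pow_two]
  have hcube₀ : 0 ≤ w ^ 3 := hcube ▸ star_left_conjugate_nonneg hz w
  have hsa : IsSelfAdjoint w := hws
  rw [StarOrderedRing.nonneg_iff_spectrum_nonneg (R := ℝ) w]
  intro t ht
  have ht₃ : 0 ≤ t ^ 3 := spectrum_nonneg_of_nonneg hcube₀ (spectrum.pow_mem_pow w 3 ht)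
  exact (Odd.pow_nonneg_iff (by decide)).mp ht₃

namespace StructuredCStar

variable (𝒜 : StructuredCStar A)

lemma Φ_star (a : A) : 𝒜.Φ (star a) = star (𝒜.Φ a) := by
  obtain ⟨y, hy, -, rfl⟩ := CStarAlgebra.exists_sum_four_nonneg a
  simp only [star_sum, map_sum, star_smul, map_smul, (IsSelfAdjoint.of_nonneg (hy _)).star_eq,
    (IsSelfAdjoint.of_nonneg (𝒜.Φ_pos _ (hy _))).star_eq]

lemma Φ_eq_self_of_mem_image {x : A} (hx : x ∈ 𝒜.Φ '' 𝒜.S) : 𝒜.Φ x = x := by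
  obtain ⟨s, -, rfl⟩ := hx
  exact 𝒜.Φ_idem s

/-- The Kadison–Schwarz inequality for the expectation. -/
lemma star_Φ_mul_Φ_le (a : A) : star (𝒜.Φ a) * 𝒜.Φ a ≤ 𝒜.Φ (star a * a) := by
  have h := 𝒜.Φ_pos _ (star_mul_self_nonneg (a - 𝒜.Φ a))
  have heq : 𝒜.Φ (star (a - 𝒜.Φ a) * (a - 𝒜.Φ a)) =
      𝒜.Φ (star a * a) - star (𝒜.Φ a) * 𝒜.Φ a := by
    simp only [star_sub, sub_mul, mul_sub, map_sub, ← 𝒜.Φ_star, 𝒜.Φ_mul_left, 𝒜.Φ_mul_right,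
      𝒜.Φ_idem]
    abel
  rwa [heq, sub_nonneg] at h

lemma norm_Φ_mul_le {a : A} (ha : a ∈ 𝒜.S) (x : A) : ‖𝒜.Φ a * x‖ ≤ ‖a * x‖ := by
  have hle : star (𝒜.Φ a) * 𝒜.Φ a ≤ star a * a :=
    (𝒜.star_Φ_mul_Φ_le a).trans_eq (𝒜.Φ_eq_self_of_mem_image (𝒜.S_sq_sub_PhiS a ha))
  have hconj : star (𝒜.Φ a * x) * (𝒜.Φ a * x) ≤ star (a * x) * (a * x) := by
    simpa only [star_mul, mul_assoc] using star_left_conjugate_le_conjugate hle x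
  have hnorm := CStarAlgebra.norm_le_norm_of_nonneg_of_le (star_mul_self_nonneg _) hconj
  rw [CStarRing.norm_star_mul_self, CStarRing.norm_star_mul_self] at hnorm
  exact (mul_self_le_mul_self_iff (norm_nonneg _) (norm_nonneg _)).mpr hnorm

lemma Z_comm {w z : A} (hw : w ∈ 𝒜.Z) (hz : z ∈ 𝒜.Z) : w * z = z * w := by
  simpa only [𝒜.Z_fixed z hz] using 𝒜.Z_central w hw z

lemma Z_sub {w z : A} (hw : w ∈ 𝒜.Z) (hz : z ∈ 𝒜.Z) : w - z ∈ 𝒜.Z := by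
  simpa [sub_eq_add_neg] using 𝒜.Z_add w hw _ (𝒜.Z_smul (-1) z hz)

/-- For a star-closed set, bistability only has to be checked on the left. -/
lemma bistable_of_left {B : Set A} (hB : ∀ x ∈ B, star x ∈ B)
    (hleft : ∀ a ∈ 𝒜.S, ∀ b ∈ 𝒜.S, a * b ∈ B → 𝒜.Φ a * b ∈ B) : 𝒜.Bistable B := by
  refine fun a ha b hb hab ↦ ⟨hleft a ha b hb hab, ?_⟩
  have h := hleft (star b) (𝒜.S_star b hb) (star a) (𝒜.S_star a ha)
    (by simpa only [star_mul] using hB _ hab)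
  simpa only [𝒜.Φ_star, star_mul, star_star] using hB _ h

lemma sub_mul_one_sub_smul_pow_mem {w h : A} (hh : h ∈ 𝒜.Z) (hwh : w * h ∈ 𝒜.Z) (c : ℝ)
    (n : ℕ) : w - w * (1 - c • h) ^ n ∈ 𝒜.Z := by
  have hsmul : ∀ x ∈ 𝒜.Z, c • x ∈ 𝒜.Z := fun x hx ↦ by simpa using 𝒜.Z_smul c x hx
  induction n with
  | zero => simpa using 𝒜.Z_smul 0 h hh
  | succ n ih =>
    have heq : w - w * (1 - c • h) ^ (n + 1) =
        (w - w * (1 - c • h) ^ n) - c • ((w - w * (1 - c • h) ^ n) * h) + c • (w * h) := by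
      rw [pow_succ, ← mul_assoc, mul_sub, mul_one, mul_smul_comm, sub_mul, smul_sub]
      abel
    rw [heq]
    exact 𝒜.Z_add _ (𝒜.Z_sub ih (hsmul _ (𝒜.Z_mul _ ih _ hh))) _ (hsmul _ hwh)

lemma Φ_mul_mem_Z (hpos : 𝒜.Bistable {z ∈ 𝒜.Z | 0 ≤ z}) {a b : A} (ha : a ∈ 𝒜.S)
    (hb : b ∈ 𝒜.S) (hab : a * b ∈ 𝒜.Z) : 𝒜.Φ a * b ∈ 𝒜.Z := by
  set z := a * b with hz
  have hzs : star z ∈ 𝒜.Z := 𝒜.Z_star z hab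
  set h := star z * z
  have hh : h ∈ 𝒜.Z := 𝒜.Z_mul _ hzs _ hab
  have hh₀ : 0 ≤ h := star_mul_self_nonneg z
  have hmul : a * (b * star z) = z * star z := by rw [← mul_assoc]
  have hw : 𝒜.Φ a * (b * star z) ∈ 𝒜.Z :=
    (hpos a ha _ (𝒜.S_mul b hb _ (𝒜.Z_sub_S hzs))
      (hmul ▸ ⟨𝒜.Z_mul _ hab _ hzs, mul_star_self_nonneg z⟩)).1.1
  have hwh : 𝒜.Φ a * b * h ∈ 𝒜.Z := by
    simpa only [h, mul_assoc] using 𝒜.Z_mul _ hw _ hab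
  set c : ℝ := (‖h‖ + 1)⁻¹
  have hc : 0 < c := by positivity
  have hch : c * ‖h‖ ≤ 1 := by
    rw [inv_mul_le_iff₀ (by positivity)]
    linarith
  have hbound (n : ℕ) : ‖𝒜.Φ a * b * (1 - c • h) ^ n‖ ≤ √(c⁻¹ * ((n : ℝ) + 1)⁻¹) := by
    have hr : IsSelfAdjoint ((1 - c • h) ^ n) :=
      (((IsSelfAdjoint.one A).sub ((IsSelfAdjoint.all c).smul (.of_nonneg hh₀))).pow n)
    have hnorm : ‖z * (1 - c • h) ^ n‖ * ‖z * (1 - c • h) ^ n‖ ≤ c⁻¹ * ((n : ℝ) + 1)⁻¹ := by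
      rw [← CStarRing.norm_star_mul_self, star_mul, hr.star_eq]
      simpa only [h, mul_assoc] using norm_one_sub_smul_pow_conjugate_le hh₀ hc hch n
    calc ‖𝒜.Φ a * b * (1 - c • h) ^ n‖ ≤ ‖z * (1 - c • h) ^ n‖ := by
          rw [hz, mul_assoc, mul_assoc a]
          exact 𝒜.norm_Φ_mul_le ha _
      _ ≤ √(c⁻¹ * ((n : ℝ) + 1)⁻¹) := Real.le_sqrt_of_sq_le (by rwa [pow_two])
  have hlim : Tendsto (fun n : ℕ ↦ √(c⁻¹ * ((n : ℝ) + 1)⁻¹)) atTop (𝓝 0) := by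
    have hinv : Tendsto (fun n : ℕ ↦ ((n : ℝ) + 1)⁻¹) atTop (𝓝 0) := by
      simpa only [one_div] using tendsto_one_div_add_atTop_nhds_zero_nat (𝕜 := ℝ)
    simpa using (hinv.const_mul c⁻¹).sqrt
  have hconv : Tendsto (fun n : ℕ ↦ 𝒜.Φ a * b - 𝒜.Φ a * b * (1 - c • h) ^ n) atTop
      (𝓝 (𝒜.Φ a * b)) := by
    simpa using (squeeze_zero_norm hbound hlim).const_sub (𝒜.Φ a * b)
  exact 𝒜.Z_isClosed.mem_of_tendsto hconv
    (.of_forall (𝒜.sub_mul_one_sub_smul_pow_mem hh hwh c))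

lemma Φ_mul_nonneg (hΦ : 𝒜.Bistable (𝒜.Φ '' 𝒜.S)) {a b : A} (ha : a ∈ 𝒜.S)
    (hab : a * b ∈ 𝒜.Z) (hab₀ : 0 ≤ a * b) (hw : 𝒜.Φ a * b ∈ 𝒜.Z) : 0 ≤ 𝒜.Φ a * b := by
  have hΦa : star (𝒜.Φ a) * a = star (𝒜.Φ a) * 𝒜.Φ a := by
    have h := 𝒜.Φ_eq_self_of_mem_image
      (hΦ (star a) (𝒜.S_star a ha) a ha (𝒜.S_sq_sub_PhiS a ha)).1
    rw [𝒜.Φ_mul_left, 𝒜.Φ_star] at h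
    exact h.symm
  refine nonneg_of_star_mul_self_eq_star_mul (𝒜.Z_comm (𝒜.Z_star _ hw) hw) (𝒜.Z_comm hw hab)
    hab₀ ?_
  simp only [star_mul, mul_assoc]
  rw [← mul_assoc _ a b, hΦa, mul_assoc]

end StructuredCStar

/-- if `Z₊` is bistable then `Z` is bistable; conversely, if
`Φ[S]` and `Z` are bistable then `Z₊` is bistable. -/
theorem StructuredCStar.bistable_pos_iff (𝒜 : StructuredCStar A) :
    (𝒜.Bistable {z ∈ 𝒜.Z | 0 ≤ z} → 𝒜.Bistable 𝒜.Z) ∧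
    (𝒜.Bistable (𝒜.Φ '' 𝒜.S) → 𝒜.Bistable 𝒜.Z →
      𝒜.Bistable {z ∈ 𝒜.Z | 0 ≤ z}) := by
  refine ⟨fun hpos ↦ 𝒜.bistable_of_left 𝒜.Z_star fun a ha b hb ↦ 𝒜.Φ_mul_mem_Z hpos ha hb,
    fun hΦ hZ ↦ 𝒜.bistable_of_left ?_ fun a ha b hb hab ↦ ?_⟩
  · exact fun z hz ↦ ⟨𝒜.Z_star z hz.1, star_nonneg_iff.mpr hz.2⟩
  · have hw := (hZ a ha b hb hab.1).1
    exact ⟨hw, 𝒜.Φ_mul_nonneg hΦ ha hab.1 hab.2 hw⟩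
end

section
/- Let (A,S,Z,Φ) be a structured C*-algebra. Every norm-closed productive subset P ⊆ S that is closed under multiplication (PP ⊆ P) is bistable. -/
variable {A : Type*} [CStarAlgebra A] [PartialOrder A] [StarOrderedRing A]

/-- every norm-closed productive subsemigroup of `S` is bistable. -/
theorem StructuredCStar.bistable_of_productive (𝒜 : StructuredCStar A) {P : Set A}
    (hPS : P ⊆ 𝒜.S) (hPclosed : IsClosed P)
    (hPmul : ∀ p ∈ P, ∀ q ∈ P, p * q ∈ P)
    (hP : 𝒜.Productive P) : 𝒜.Bistable P := by
  intro a ha b hb hab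
  constructor
  · have hmaps : Set.MapsTo (· * b) ((· * a) '' P) P := by
      rintro _ ⟨p, hp, rfl⟩
      simpa only [mul_assoc] using hPmul p hp (a * b) hab
    have h := hmaps.closure (continuous_mul_const b) (hP a ha).2
    rwa [hPclosed.closure_eq] at h
  · have hmaps : Set.MapsTo (a * ·) ((b * ·) '' P) P := by
      rintro _ ⟨p, hp, rfl⟩
      simpa only [mul_assoc] using hPmul (a * b) hab p hp
    have h := hmaps.closure (continuous_const_mul a) (hP b hb).1
    rwa [hPclosed.closure_eq] at h
end

section
/- Let (A,S,Z,Φ) be a structured C*-algebra. Then Z is productive if and only if Z¹₊ (the set of positive elements of Z of norm at most 1) is productive. -/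
variable {A : Type*} [CStarAlgebra A] [PartialOrder A] [StarOrderedRing A]

namespace StructuredCStar

/-- The subset `Z` of a structured C*-algebra as a star subalgebra. -/
def starSubalgebraZ (𝒜 : StructuredCStar A) (hne : 𝒜.Z.Nonempty) :
    NonUnitalStarSubalgebra ℂ A where
  carrier := 𝒜.Z
  add_mem' {a b} ha hb := 𝒜.Z_add a ha b hb
  zero_mem' := by
    obtain ⟨z, hz⟩ := hne
    simpa using 𝒜.Z_smul 0 z hz
  mul_mem' {a b} ha hb := 𝒜.Z_mul a ha b hb
  smul_mem' c a ha := 𝒜.Z_smul c a ha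
  star_mem' {a} ha := 𝒜.Z_star a ha

theorem commute_of_mem_Z (𝒜 : StructuredCStar A) {z w : A} (hz : z ∈ 𝒜.Z) (hw : w ∈ 𝒜.Z) :
    Commute z w := by
  have h := 𝒜.Z_central z hz w
  rwa [𝒜.Z_fixed w hw] at h

end StructuredCStar

/-- Right multiplication by a normal element and by its adjoint have the same norm pointwise. -/
theorem norm_mul_star_of_isStarNormal {A : Type*} [CStarAlgebra A] (b z : A) [IsStarNormal z] :
    ‖b * star z‖ = ‖b * z‖ := by
  have h : ‖b * star z‖ * ‖b * star z‖ = ‖b * z‖ * ‖b * z‖ := by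
    rw [← CStarRing.norm_self_mul_star, ← CStarRing.norm_self_mul_star]
    simp only [star_mul, star_star, mul_assoc]
    rw [← mul_assoc (star z) z, ← mul_assoc z (star z), star_comm_self' z]
  exact (mul_self_inj (norm_nonneg _) (norm_nonneg _)).1 h

/-- Right multiplication by the real part of a normal element does not increase the norm. -/
theorem norm_mul_realPart_le {A : Type*} [CStarAlgebra A] (b z : A) [IsStarNormal z] :
    ‖b * (realPart z : A)‖ ≤ ‖b * z‖ := by
  have h : b * (realPart z : A) = (2⁻¹ : ℝ) • (b * z + b * star z) := by
    rw [realPart_apply_coe, mul_smul_comm, mul_add]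
  rw [h, norm_smul]
  have := norm_add_le (b * z) (b * star z)
  rw [norm_mul_star_of_isStarNormal] at this
  norm_num
  linarith

section Cutoff

variable {A : Type*} [CStarAlgebra A] [PartialOrder A] [StarOrderedRing A]

/-- For self-adjoint `x`, the element `y = 4 x² (1 + x²)⁻²` is a positive contraction which is a
bounded multiple of `x` and such that `1 - y` is a bounded multiple of `1 - x`. -/
theorem IsSelfAdjoint.exists_cutoff {x : A} (hx : IsSelfAdjoint x) (Z : NonUnitalStarSubalgebra ℂ A)
    (hZ : IsClosed (Z : Set A)) (hxZ : x ∈ Z) :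
    ∃ y ∈ Z, 0 ≤ y ∧ ‖y‖ ≤ 1 ∧ (∃ k : A, ‖k‖ ≤ 4 ∧ y = x * k) ∧
      ∃ m : A, ‖m‖ ≤ 4 ∧ 1 - y = (1 - x) * m := by
  have hpos : ∀ t : ℝ, 0 < (1 + t ^ 2) ^ 2 := fun t ↦ by positivity
  have hne : ∀ t : ℝ, (1 + t ^ 2) ^ 2 ≠ 0 := fun t ↦ (hpos t).ne'
  let f : ℝ → ℝ := fun t ↦ 4 * t ^ 2 / (1 + t ^ 2) ^ 2
  let k : ℝ → ℝ := fun t ↦ 4 * t / (1 + t ^ 2) ^ 2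
  let m : ℝ → ℝ := fun t ↦ (1 - t) * (1 + t) ^ 2 / (1 + t ^ 2) ^ 2
  have hf : Continuous f := Continuous.div (by fun_prop) (by fun_prop) hne
  have hk : Continuous k := Continuous.div (by fun_prop) (by fun_prop) hne
  have hm : Continuous m := Continuous.div (by fun_prop) (by fun_prop) hne
  have hf_nonneg : ∀ t, 0 ≤ f t := fun t ↦ by positivity
  refine ⟨cfc f x, ?_, cfc_nonneg fun t _ ↦ hf_nonneg t, norm_cfc_le zero_le_one fun t _ ↦ ?_,
    ⟨cfc k x, norm_cfc_le (by norm_num) fun t _ ↦ ?_, ?_⟩,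
    ⟨cfc m x, norm_cfc_le (by norm_num) fun t _ ↦ ?_, ?_⟩⟩
  · rw [← cfcₙ_eq_cfc (hf := hf.continuousOn) (hf0 := by simp [f])]
    have := hZ
    exact cfcₙ_mem (𝕜 := ℝ) (𝕜' := ℂ) f hxZ
  · rw [Real.norm_of_nonneg (hf_nonneg t), div_le_one (hpos t)]
    nlinarith [sq_nonneg (1 - t ^ 2)]
  · rw [Real.norm_eq_abs, abs_div, abs_of_pos (hpos t), div_le_iff₀ (hpos t), abs_le]
    constructor <;> nlinarith [sq_nonneg (1 - t), sq_nonneg (1 + t), sq_nonneg (t ^ 2)]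
  · conv_rhs => enter [1]; rw [← cfc_id' ℝ x]
    rw [← cfc_mul _ _ x (by fun_prop) hk.continuousOn]
    refine cfc_congr fun t _ ↦ ?_
    simp only [f, k]
    ring
  · rw [Real.norm_eq_abs, abs_div, abs_of_pos (hpos t), div_le_iff₀ (hpos t), abs_le]
    constructor <;> nlinarith [sq_nonneg (1 - t), sq_nonneg (1 + t), sq_nonneg (t ^ 2),
      sq_nonneg (t ^ 2 - t), sq_nonneg (t ^ 2 + t)]
  · conv_rhs => enter [1]; rw [← cfc_id' ℝ x, ← cfc_const_one ℝ x]
    conv_lhs => enter [1]; rw [← cfc_const_one ℝ x]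
    rw [← cfc_sub _ _ x (by fun_prop) hf.continuousOn, ← cfc_sub _ _ x (by fun_prop) (by fun_prop),
      ← cfc_mul _ _ x (by fun_prop) hm.continuousOn]
    refine cfc_congr fun t _ ↦ ?_
    simp only [f, m]
    have := hne t
    field_simp
    ring

end Cutoff

namespace StructuredCStar

/-- Elements of `Z` may be replaced by positive contractions of `Z` at the cost of a factor `4`. -/
theorem exists_pos_contraction (𝒜 : StructuredCStar A) {z : A} (hz : z ∈ 𝒜.Z) (b c : A) :
    ∃ y ∈ 𝒜.Z, 0 ≤ y ∧ ‖y‖ ≤ 1 ∧ ‖b * y‖ ≤ 4 * ‖b * z‖ ∧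
      ‖c * (1 - y)‖ ≤ 4 * ‖c * (1 - z)‖ := by
  have hstar : Commute (star z) z := 𝒜.commute_of_mem_Z (𝒜.Z_star z hz) hz
  have : IsStarNormal z := ⟨hstar⟩
  have : IsStarNormal (1 - z) := ⟨by
    rw [star_sub, star_one]
    exact ((Commute.one_left _).sub_left ((Commute.one_right _).sub_right hstar))⟩
  let W := 𝒜.starSubalgebraZ ⟨z, hz⟩
  have hx : (realPart z : A) ∈ W := by
    have h : (realPart z : A) = (2⁻¹ : ℂ) • (z + star z) := by
      rw [realPart_apply_coe, ← Complex.coe_smul]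
      norm_num
    rw [h]
    exact 𝒜.Z_smul _ _ (𝒜.Z_add _ hz _ (𝒜.Z_star z hz))
  have hre : (realPart (1 - z) : A) = 1 - (realPart z : A) := by
    simp [map_sub]
  obtain ⟨y, hyZ, hy0, hy1, ⟨k, hk, hyk⟩, m, hm, hym⟩ :=
    (realPart z).2.exists_cutoff W 𝒜.Z_isClosed hx
  refine ⟨y, hyZ, hy0, hy1, ?_, ?_⟩
  · calc ‖b * y‖ = ‖b * (realPart z : A) * k‖ := by rw [hyk, mul_assoc]
      _ ≤ ‖b * (realPart z : A)‖ * ‖k‖ := norm_mul_le _ _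
      _ ≤ ‖b * z‖ * 4 := by gcongr; exact norm_mul_realPart_le b z
      _ = 4 * ‖b * z‖ := mul_comm _ _
  · calc ‖c * (1 - y)‖ = ‖c * (realPart (1 - z) : A) * m‖ := by rw [hym, hre, mul_assoc]
      _ ≤ ‖c * (realPart (1 - z) : A)‖ * ‖m‖ := norm_mul_le _ _
      _ ≤ ‖c * (1 - z)‖ * 4 := by gcongr; exact norm_mul_realPart_le c (1 - z)
      _ = 4 * ‖c * (1 - z)‖ := mul_comm _ _

/-- An approximation of `Φ a` by `a * z` yields one by a positive contraction. -/
theorem exists_pos_contraction_mul_right (𝒜 : StructuredCStar A) {z : A} (hz : z ∈ 𝒜.Z) (a : A) :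
    ∃ y ∈ 𝒜.Z, 0 ≤ y ∧ ‖y‖ ≤ 1 ∧ ‖a * y - 𝒜.Φ a‖ ≤ 12 * ‖a * z - 𝒜.Φ a‖ := by
  obtain ⟨y, hyZ, hy0, hy1, hb, hc⟩ := 𝒜.exists_pos_contraction hz (a - 𝒜.Φ a) (𝒜.Φ a)
  refine ⟨y, hyZ, hy0, hy1, ?_⟩
  have hΦ : 𝒜.Φ (a * z - 𝒜.Φ a) = -(𝒜.Φ a * (1 - z)) := by
    have h := 𝒜.Φ_mul_right a z
    rw [𝒜.Z_fixed z hz] at h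
    rw [map_sub, h, 𝒜.Φ_idem]
    noncomm_ring
  have h₁ : ‖𝒜.Φ a * (1 - z)‖ ≤ ‖a * z - 𝒜.Φ a‖ := by
    simpa [hΦ] using 𝒜.Φ_contractive (a * z - 𝒜.Φ a)
  have h₂ : (a - 𝒜.Φ a) * z = (a * z - 𝒜.Φ a) + 𝒜.Φ a * (1 - z) := by noncomm_ring
  have h₃ : a * y - 𝒜.Φ a = (a - 𝒜.Φ a) * y - 𝒜.Φ a * (1 - y) := by noncomm_ring
  have h₄ := norm_add_le (a * z - 𝒜.Φ a) (𝒜.Φ a * (1 - z))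
  have h₅ := norm_sub_le ((a - 𝒜.Φ a) * y) (𝒜.Φ a * (1 - y))
  rw [← h₂] at h₄
  rw [← h₃] at h₅
  linarith

/-- An approximation of `Φ a` by `z * a` yields one by a positive contraction. -/
theorem exists_pos_contraction_mul_left (𝒜 : StructuredCStar A) {z : A} (hz : z ∈ 𝒜.Z) (a : A) :
    ∃ y ∈ 𝒜.Z, 0 ≤ y ∧ ‖y‖ ≤ 1 ∧ ‖y * a - 𝒜.Φ a‖ ≤ 12 * ‖z * a - 𝒜.Φ a‖ := by
  obtain ⟨y, hyZ, hy0, hy1, hb, hc⟩ :=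
    𝒜.exists_pos_contraction (𝒜.Z_star z hz) (star (a - 𝒜.Φ a)) (star (𝒜.Φ a))
  refine ⟨y, hyZ, hy0, hy1, ?_⟩
  have hys : star y = y := (IsSelfAdjoint.of_nonneg hy0).star_eq
  have hb' : ‖y * (a - 𝒜.Φ a)‖ ≤ 4 * ‖z * (a - 𝒜.Φ a)‖ := by
    rwa [← star_mul, norm_star, ← norm_star, star_mul, star_star, hys] at hb
  have hc' : ‖(1 - y) * 𝒜.Φ a‖ ≤ 4 * ‖(1 - z) * 𝒜.Φ a‖ := by
    rw [← norm_star, ← norm_star ((1 - z) * 𝒜.Φ a)]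
    simpa [hys] using hc
  have hΦ : 𝒜.Φ (z * a - 𝒜.Φ a) = -((1 - z) * 𝒜.Φ a) := by
    have h := 𝒜.Φ_mul_left z a
    rw [𝒜.Z_fixed z hz] at h
    rw [map_sub, h, 𝒜.Φ_idem]
    noncomm_ring
  have h₁ : ‖(1 - z) * 𝒜.Φ a‖ ≤ ‖z * a - 𝒜.Φ a‖ := by
    simpa [hΦ] using 𝒜.Φ_contractive (z * a - 𝒜.Φ a)
  have h₂ : z * (a - 𝒜.Φ a) = (z * a - 𝒜.Φ a) + (1 - z) * 𝒜.Φ a := by noncomm_ring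
  have h₃ : y * a - 𝒜.Φ a = y * (a - 𝒜.Φ a) - (1 - y) * 𝒜.Φ a := by noncomm_ring
  have h₄ := norm_add_le (z * a - 𝒜.Φ a) ((1 - z) * 𝒜.Φ a)
  have h₅ := norm_sub_le (y * (a - 𝒜.Φ a)) ((1 - y) * 𝒜.Φ a)
  rw [← h₂] at h₄
  rw [← h₃] at h₅
  linarith

end StructuredCStar

/-- `Z` is productive iff `Z¹₊` is productive. -/
theorem StructuredCStar.productive_iff_productive_pos_unitBall (𝒜 : StructuredCStar A) :
    𝒜.Productive 𝒜.Z ↔ 𝒜.Productive {z ∈ 𝒜.Z | 0 ≤ z ∧ ‖z‖ ≤ 1} := by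
  refine ⟨fun h a ha ↦ ⟨?_, ?_⟩, fun h a ha ↦ ⟨?_, ?_⟩⟩
  · rw [Metric.mem_closure_iff]
    intro ε hε
    obtain ⟨_, ⟨z, hz, rfl⟩, hd⟩ := Metric.mem_closure_iff.1 (h a ha).1 (ε / 12) (by positivity)
    obtain ⟨y, hyZ, hy0, hy1, hy⟩ := 𝒜.exists_pos_contraction_mul_right hz a
    refine ⟨_, ⟨y, ⟨hyZ, hy0, hy1⟩, rfl⟩, ?_⟩
    rw [dist_comm, dist_eq_norm] at hd ⊢
    linarith
  · rw [Metric.mem_closure_iff]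
    intro ε hε
    obtain ⟨_, ⟨z, hz, rfl⟩, hd⟩ := Metric.mem_closure_iff.1 (h a ha).2 (ε / 12) (by positivity)
    obtain ⟨y, hyZ, hy0, hy1, hy⟩ := 𝒜.exists_pos_contraction_mul_left hz a
    refine ⟨_, ⟨y, ⟨hyZ, hy0, hy1⟩, rfl⟩, ?_⟩
    rw [dist_comm, dist_eq_norm] at hd ⊢
    linarith
  · exact closure_mono (Set.image_mono fun z hz ↦ hz.1) (h a ha).1
  · exact closure_mono (Set.image_mono fun z hz ↦ hz.1) (h a ha).2
end
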